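/- Let A = {a,b,c}, m ≥ 4, and x₁, x₂, y₁, y₂ ≥ 1 with x₁ + x₂ = y₁ + y₂ = m - 3. If x₁ and y₁ are both even and y₁ ≤ x₂ ≤ x₁, then the set {a⋄^{m-2}a, b⋄^{m-2}b, c⋄^{m-2}c, a⋄^{x₁}b⋄^{x₂}b, b⋄^{y₁}b⋄^{y₂}c, a⋄^{m-2}c} is avoidable, and moreover avoidable by a two-sided infinite word whose period is at most m. -/

import Mathlib

/-- The three-letter alphabet. -/
inductive ABC | a | b | c
deriving DecidableEq
open ABC

/-- A partial word of length `m` over alphabet `A`. -/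
abbrev PW (m : ℕ) (A : Type) := Fin m → Option A

/-- A two-sided infinite word `w` meets a partial word `u`. -/
def Meets {m : ℕ} {A : Type} (w : ℤ → A) (u : PW m A) : Prop :=
  ∃ i : ℤ, ∀ j : Fin m, ∀ x : A, u j = some x → w (i + (j : ℕ)) = x

/-- A set of partial words is unavoidable over `A`. -/
def Unavoidable {m : ℕ} {A : Type} (X : Set (PW m A)) : Prop :=
  ∀ w : ℤ → A, ∃ u ∈ X, Meets w u

/-- A set of partial words is avoidable over `A`. -/
def Avoidable {m : ℕ} {A : Type} (X : Set (PW m A)) : Prop :=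
  ∃ w : ℤ → A, ∀ u ∈ X, ¬ Meets w u

/-- The partial word `x ⋄^(m-2) y` of length `m`: first letter `x`, last letter `y`,
holes in between. -/
def oneHole {A : Type} (m : ℕ) (x y : A) : PW m A :=
  fun j => if (j : ℕ) = 0 then some x else if (j : ℕ) = m - 1 then some y else none

/-- The partial word `x ⋄^(p-1) d ⋄^(m-p-2) y` of length `m`: first letter `x`,
letter `d` at position `p`, last letter `y`, holes elsewhere. -/
def twoDef {A : Type} (m : ℕ) (x d y : A) (p : ℕ) : PW m A :=
  fun j => if (j : ℕ) = 0 then some x else if (j : ℕ) = p then some d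
    else if (j : ℕ) = m - 1 then some y else none

/-- The two-sided infinite word of period `P` repeating the block `f` (given on `[0, P)`). -/
def periodic {A : Type} (P : ℕ) (f : ℕ → A) : ℤ → A :=
  fun i => f ((i % (P : ℤ)).toNat)

lemma meets_oneHole {A : Type} {m : ℕ} (hm : 4 ≤ m) {w : ℤ → A} {x y : A}
    (h : Meets w (oneHole m x y)) : ∃ i : ℤ, w i = x ∧ w (i + (m - 1)) = y := by
  obtain ⟨i, hi⟩ := h
  refine ⟨i, ?_, ?_⟩
  · simpa using hi ⟨0, by omega⟩ x (by simp [oneHole])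
  · have := hi ⟨m - 1, by omega⟩ y (by
      have : m - 1 ≠ 0 := by omega
      simp [oneHole, this])
    rw [← this]
    congr 1
    simp only []
    omega

lemma meets_twoDef {A : Type} {m : ℕ} (hm : 4 ≤ m) {w : ℤ → A} {x d y : A} {p : ℕ}
    (hp0 : 0 < p) (hp : p < m - 1)
    (h : Meets w (twoDef m x d y p)) :
    ∃ i : ℤ, w i = x ∧ w (i + p) = d ∧ w (i + (m - 1)) = y := by
  obtain ⟨i, hi⟩ := h
  refine ⟨i, ?_, ?_, ?_⟩
  · simpa using hi ⟨0, by omega⟩ x (by simp [twoDef])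
  · have := hi ⟨p, by omega⟩ d (by
      have : p ≠ 0 := by omega
      simp [twoDef, this])
    exact this
  · have := hi ⟨m - 1, by omega⟩ y (by
      have h1 : m - 1 ≠ 0 := by omega
      have h2 : m - 1 ≠ p := by omega
      simp [twoDef, h1, h2])
    rw [← this]
    congr 1
    simp only []
    omega

/-- Residues of shifts by less than a period. -/
lemma emod_shift (i : ℤ) (m k : ℤ) (hm : 0 < m) (hk : 0 ≤ k) (hkm : k < m) :
    0 ≤ i % m ∧ i % m < m ∧
      ((i % m + k < m ∧ (i + k) % m = i % m + k) ∨
       (m ≤ i % m + k ∧ (i + k) % m = i % m + k - m)) := by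
  have h0 := Int.emod_nonneg i hm.ne'
  have h1 := Int.emod_lt_of_pos i hm
  refine ⟨h0, h1, ?_⟩
  have h2 : (i + k) % m = (i % m + k) % m := by rw [Int.emod_add_emod]
  rw [h2]
  by_cases h : i % m + k < m
  · exact Or.inl ⟨h, Int.emod_eq_of_lt (by omega) h⟩
  · refine Or.inr ⟨by omega, ?_⟩
    rw [← Int.sub_emod_right, Int.emod_eq_of_lt (by omega) (by omega)]

/-- The block used for odd `m`. -/
def blk (m x₂ : ℕ) (r : ℤ) : ABC :=
  if r = m - 1 then c else if r % 2 = 0 then b else if r < x₂ then c else a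

lemma blk_a {m x₂ : ℕ} {r : ℤ} (h : blk m x₂ r = a) :
    r ≠ m - 1 ∧ r % 2 = 1 ∧ (x₂ : ℤ) ≤ r := by
  unfold blk at h
  split_ifs at h; omega

lemma blk_b {m x₂ : ℕ} {r : ℤ} (h : blk m x₂ r = b) :
    r ≠ m - 1 ∧ r % 2 = 0 := by
  unfold blk at h
  split_ifs at h; omega

lemma blk_c {m x₂ : ℕ} {r : ℤ} (h : blk m x₂ r = c) :
    r = m - 1 ∨ (r % 2 = 1 ∧ r < x₂) := by
  unfold blk at h
  split_ifs at h <;> omega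

/-- If x₁ and y₁ are even and y₁ ≤ x₂ ≤ x₁, then
{a⋄^(m-2)a, b⋄^(m-2)b, c⋄^(m-2)c, a⋄^(x₁)b⋄^(x₂)b, b⋄^(y₁)b⋄^(y₂)c, a⋄^(m-2)c}
is avoidable by a word of period at most m. -/
theorem stmt_8 (m x₁ x₂ y₁ y₂ : ℕ) (hm : 4 ≤ m)
    (hx₁ : 1 ≤ x₁) (hx₂ : 1 ≤ x₂) (hy₁ : 1 ≤ y₁) (hy₂ : 1 ≤ y₂)
    (hsx : x₁ + x₂ = m - 3) (hsy : y₁ + y₂ = m - 3)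
    (hex : Even x₁) (hey : Even y₁) (hord : y₁ ≤ x₂ ∧ x₂ ≤ x₁) :
    ∃ w : ℤ → ABC, (∃ p : ℕ, 0 < p ∧ p ≤ m ∧ ∀ i : ℤ, w (i + (p : ℕ)) = w i) ∧
      ∀ u ∈ ({oneHole m a a, oneHole m b b, oneHole m c c,
              twoDef m a b b (x₁ + 1), twoDef m b b c (y₁ + 1),
              oneHole m a c} : Set (PW m ABC)), ¬ Meets w u := by
  have key : ∀ w : ℤ → ABC,
      (∀ i, w i = a → w (i + (m - 1)) = a → False) →
      (∀ i, w i = b → w (i + (m - 1)) = b → False) →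
      (∀ i, w i = c → w (i + (m - 1)) = c → False) →
      (∀ i, w i = a → w (i + (x₁ + 1 : ℕ)) = b → w (i + (m - 1)) = b → False) →
      (∀ i, w i = b → w (i + (y₁ + 1 : ℕ)) = b → w (i + (m - 1)) = c → False) →
      (∀ i, w i = a → w (i + (m - 1)) = c → False) →
      ∀ u ∈ ({oneHole m a a, oneHole m b b, oneHole m c c,
              twoDef m a b b (x₁ + 1), twoDef m b b c (y₁ + 1),
              oneHole m a c} : Set (PW m ABC)), ¬ Meets w u := by
    intro w h1 h2 h3 h4 h5 h6 u hu hM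
    simp only [Set.mem_insert_iff, Set.mem_singleton_iff] at hu
    rcases hu with rfl | rfl | rfl | rfl | rfl | rfl
    · obtain ⟨i, p, q⟩ := meets_oneHole hm hM; exact h1 i p q
    · obtain ⟨i, p, q⟩ := meets_oneHole hm hM; exact h2 i p q
    · obtain ⟨i, p, q⟩ := meets_oneHole hm hM; exact h3 i p q
    · obtain ⟨i, p, q, r⟩ := meets_twoDef hm (by omega) (by omega) hM; exact h4 i p q r
    · obtain ⟨i, p, q, r⟩ := meets_twoDef hm (by omega) (by omega) hM; exact h5 i p q r
    · obtain ⟨i, p, q⟩ := meets_oneHole hm hM; exact h6 i p q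
  obtain ⟨k, hk⟩ := hex
  obtain ⟨l, hl⟩ := hey
  rcases Nat.even_or_odd' m with ⟨t, ht | ht⟩
  · -- even `m`: the word `(bc)` repeated
    have hb : ∀ i : ℤ, (if i % 2 = 0 then b else c) = b → i % 2 = 0 := by
      intro i h; by_contra h'; simp [h'] at h
    have hc : ∀ i : ℤ, (if i % 2 = 0 then b else c) = c → i % 2 = 1 := by
      intro i h; by_contra h'
      have : i % 2 = 0 := by omega
      simp [this] at h
    have ha : ∀ i : ℤ, (if i % 2 = 0 then b else c) = a → False := by
      intro i h; split_ifs at h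
    refine ⟨fun i => if i % 2 = 0 then b else c, ⟨2, by omega, by omega, ?_⟩, key _ ?_ ?_ ?_ ?_ ?_ ?_⟩
    · intro i; simp
    · intro i h; exact (ha _ h).elim
    · intro i h h'; have := hb _ h; have := hb _ h'; omega
    · intro i h h'; have := hc _ h; have := hc _ h'; omega
    · intro i h; exact (ha _ h).elim
    · intro i h h' _; have := hb _ h; have := hb _ h'; push_cast at *; omega
    · intro i h; exact (ha _ h).elim
  · -- odd `m`
    have sh := fun i : ℤ => emod_shift i m (m - 1) (by omega) (by omega) (by omega)
    have sx := fun i : ℤ => emod_shift i m (x₁ + 1 : ℕ) (by omega) (by omega) (by omega)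
    have sy := fun i : ℤ => emod_shift i m (y₁ + 1 : ℕ) (by omega) (by omega) (by omega)
    refine ⟨fun i => blk m x₂ (i % m), ⟨m, by omega, le_rfl, ?_⟩, key _ ?_ ?_ ?_ ?_ ?_ ?_⟩
    · intro i; simp
    · intro i h h'; have := blk_a h; have := blk_a h'; have := sh i; omega
    · intro i h h'; have := blk_b h; have := blk_b h'; have := sh i; omega
    · intro i h h'; have := blk_c h; have := blk_c h'; have := sh i; omega
    · intro i h h' h''; have := blk_a h; have := blk_b h'; have := sx i; omega
    · intro i h h' h''
      have := blk_b h; have := blk_b h'; have := blk_c h''; have := sh i; have := sy i; omega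
    · intro i h h'; have := blk_a h; have := blk_c h'; have := sh i; omega
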